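/- Let n ≥ 1 be a natural number and set β_{1,n} = (8πn(n+1)/T) · cot(nπ/(2(n+1))). Then for every ε > 0 there exists a ∈ Λ_n such that ∫_0^T |a(x) − λ_{2n−1}| dx < β_{1,n} + ε. Consequently inf_{a ∈ Λ_n} ‖a − λ_{2n−1}‖_{L¹(0,T)} = β_{1,n}. -/

import Mathlib

open MeasureTheory Set Real

/-- `u` is a solution of `u'' + a·u = 0` on `[c,d]`, with derivative function `v`. -/
def IsSolOn (a u v : ℝ → ℝ) (c d : ℝ) : Prop :=
  (∀ x ∈ Set.Icc c d, HasDerivWithinAt u (v x) (Set.Icc c d) x) ∧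
  (∀ x ∈ Set.Icc c d, v x = v c - ∫ t in c..x, a t * u t)

/-- Membership in `L_T`: measurable, `T`-periodic and integrable on `[0,T]`. -/
def MemLT (T : ℝ) (a : ℝ → ℝ) : Prop :=
  Measurable a ∧ (∀ x, a (x + T) = a x) ∧ IntegrableOn a (Set.Icc 0 T)

/-- `c ≺ d` : `c ≤ d` a.e. on `[0,T]` and `c < d` on a set of positive measure. -/
def Prec (T : ℝ) (c d : ℝ → ℝ) : Prop :=
  (∀ᵐ x ∂(volume.restrict (Set.Icc 0 T)), c x ≤ d x) ∧
  0 < volume {x ∈ Set.Icc 0 T | c x < d x}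

/-- `(u,v)` solves the periodic problem `u'' + a u = 0`, `u(0)=u(T)`, `u'(0)=u'(T)`. -/
def PeriodicSol (T : ℝ) (a u v : ℝ → ℝ) : Prop :=
  IsSolOn a u v 0 T ∧ u 0 = u T ∧ v 0 = v T

/-- `(u,v)` solves the antiperiodic problem `u'' + a u = 0`, `u(0)+u(T)=0`, `u'(0)+u'(T)=0`. -/
def AntiperiodicSol (T : ℝ) (a u v : ℝ → ℝ) : Prop :=
  IsSolOn a u v 0 T ∧ u 0 + u T = 0 ∧ v 0 + v T = 0

/-- The `(2n-1)`-st periodic eigenvalue `λ_{2n-1} = 4 n² π² / T²`. -/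
noncomputable def lam (T : ℝ) (n : ℕ) : ℝ := 4 * (n : ℝ) ^ 2 * Real.pi ^ 2 / T ^ 2

/-- The `(2n-1)`-st antiperiodic eigenvalue `λ̃_{2n-1} = (2n-1)² π² / T²`. -/
noncomputable def lamT (T : ℝ) (n : ℕ) : ℝ := (2 * (n : ℝ) - 1) ^ 2 * Real.pi ^ 2 / T ^ 2

/-- The set `Λ_n`. -/
def LambdaN (T : ℝ) (n : ℕ) : Set (ℝ → ℝ) :=
  {a | MemLT T a ∧ Prec T (fun _ => lam T n) a ∧
    ∃ u v : ℝ → ℝ, PeriodicSol T a u v ∧ ∃ x ∈ Set.Icc 0 T, u x ≠ 0}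

/-- The set `Λ̃_n`. -/
def LambdaTildeN (T : ℝ) (n : ℕ) : Set (ℝ → ℝ) :=
  {a | MemLT T a ∧ Prec T (fun _ => lamT T n) a ∧
    ∃ u v : ℝ → ℝ, AntiperiodicSol T a u v ∧ ∃ x ∈ Set.Icc 0 T, u x ≠ 0}

/-- The constant `β_{1,n}` of the periodic `L¹` Lyapunov inequality. -/
noncomputable def beta1 (T : ℝ) (n : ℕ) : ℝ :=
  8 * Real.pi * (n : ℝ) * ((n : ℝ) + 1) / T * Real.cot ((n : ℝ) * Real.pi / (2 * ((n : ℝ) + 1)))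

/-- The constant `β̃_{1,n}` of the antiperiodic `L¹` Lyapunov inequality. -/
noncomputable def betaT1 (T : ℝ) (n : ℕ) : ℝ :=
  2 * Real.pi * (2 * (n : ℝ) - 1) * (2 * (n : ℝ) + 1) / T *
    Real.cot ((2 * (n : ℝ) - 1) * Real.pi / (2 * (2 * (n : ℝ) + 1)))

/-!
Write `ω² = λ_{2n-1}`, so that `ωT = 2πn`. For the lower bound, follow the argument `θ` of
`u' + iωu`, which satisfies `θ' = ω + (a - ω²)/ω · sin²θ`. Since `θ' ≥ ω`, strictly on a set of
positive measure, a periodic solution must wind at least `n + 1` times. Multiplying the equation by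
the weight `w(θ) = min (1 / sin²θ) (1 / sin²α)` gives `ω w(θ) θ' ≤ (a - ω²) + ω² / sin²α`. The left
side integrates to at least `2(n + 1) ω ∫_0^π w`, and for `α = nπ / (2(n + 1))` the plateau part of
`∫_0^π w` cancels `ω²T / sin²α` exactly, leaving `β_{1,n}`.

Equality would force `θ` to jump from `α` to `π - α` (mod `π`) at point masses of `a`, sitting at
the midpoints of `2(n + 1)` equal cells. Replace these by narrow square wells whose depth is tuned
so that each cell carries the Cauchy data `(0, ω)` to `(0, -ω)`; the cost tends to `β_{1,n}` with
the width.
-/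

open scoped Topology

section AbsolutelyContinuous

variable {X Y E : Type*} [PseudoMetricSpace X] [PseudoMetricSpace Y]
  [NormedAddCommGroup E] [NormedSpace ℝ E] {a b : ℝ}

theorem absolutelyContinuousOnInterval_of_dist_le {f : ℝ → X} {g : ℝ → Y} {K : ℝ}
    (hg : AbsolutelyContinuousOnInterval g a b)
    (hfg : ∀ x ∈ uIcc a b, ∀ y ∈ uIcc a b, dist (f x) (f y) ≤ K * dist (g x) (g y)) :
    AbsolutelyContinuousOnInterval f a b := by
  have hbound : ∀ᶠ I in AbsolutelyContinuousOnInterval.totalLengthFilter ⊓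
      Filter.principal (AbsolutelyContinuousOnInterval.disjWithin a b),
      ∑ i ∈ Finset.range I.1, dist (f (I.2 i).1) (f (I.2 i).2) ≤
        K * ∑ i ∈ Finset.range I.1, dist (g (I.2 i).1) (g (I.2 i).2) := by
    filter_upwards [Filter.mem_inf_of_right (Filter.mem_principal_self _)] with I hI
    rw [Finset.mul_sum]
    exact Finset.sum_le_sum fun i hi => hfg _ (hI.1 i hi).1 _ (hI.1 i hi).2
  exact squeeze_zero' (.of_forall fun I => Finset.sum_nonneg fun i _ => dist_nonneg) hbound
    (by simpa using Filter.Tendsto.const_mul K hg)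

theorem absolutelyContinuousOnInterval_comp_of_contDiff {F : Type*} [NormedAddCommGroup F]
    [NormedSpace ℝ F] {G : E → F} {f : ℝ → E} (hG : ContDiff ℝ 1 G)
    (hf : AbsolutelyContinuousOnInterval f a b) :
    AbsolutelyContinuousOnInterval (fun x => G (f x)) a b := by
  obtain ⟨K, hK⟩ := hG.locallyLipschitz.locallyLipschitzOn.exists_lipschitzOnWith_of_compact
    (isCompact_uIcc.image_of_continuousOn hf.continuousOn)
  exact absolutelyContinuousOnInterval_of_dist_le hf fun x hx y hy =>
    hK.dist_le_mul _ (mem_image_of_mem f hx) _ (mem_image_of_mem f hy)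

theorem absolutelyContinuousOnInterval_integral {f : ℝ → E}
    (hf : IntervalIntegrable f volume a b) :
    AbsolutelyContinuousOnInterval (fun x => ∫ t in a..x, f t) a b := by
  refine absolutelyContinuousOnInterval_of_dist_le (K := 1)
    (hf.norm.absolutelyContinuousOnInterval_intervalIntegral left_mem_uIcc) fun x hx y hy => ?_
  have hsub : ∀ {z}, z ∈ uIcc a b → IntervalIntegrable f volume a z := fun hz =>
    hf.mono_set (uIcc_subset_uIcc_left hz)
  rw [one_mul, dist_eq_norm, dist_eq_norm,
    intervalIntegral.integral_interval_sub_left (hsub hx) (hsub hy),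
    intervalIntegral.integral_interval_sub_left (hsub hx).norm (hsub hy).norm]
  exact intervalIntegral.norm_integral_le_abs_integral_norm

theorem integral_comp_mul_deriv_of_absolutelyContinuousOnInterval {h θ : ℝ → ℝ}
    (hh : Continuous h) (hθ : AbsolutelyContinuousOnInterval θ a b) :
    ∫ x in a..b, h (θ x) * deriv θ x = ∫ y in θ a..θ b, h y := by
  set H : ℝ → ℝ := fun y => ∫ s in θ a..y, h s
  have hH : ∀ y, HasDerivAt H (h y) y := fun y => hh.integral_hasStrictDerivAt _ _ |>.hasDerivAt
  have hH1 : ContDiff ℝ 1 H := contDiff_one_iff_deriv.2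
    ⟨fun y => (hH y).differentiableAt, by simpa only [funext fun y => (hH y).deriv] using hh⟩
  calc ∫ x in a..b, h (θ x) * deriv θ x = ∫ x in a..b, deriv (fun x => H (θ x)) x := by
        refine intervalIntegral.integral_congr_ae ?_
        filter_upwards [hθ.ae_differentiableAt] with x hx hxab
        exact ((hH _).comp x (hx (uIoc_subset_uIcc hxab)).hasDerivAt).deriv.symm
    _ = H (θ b) - H (θ a) :=
        (absolutelyContinuousOnInterval_comp_of_contDiff hH1 hθ).integral_deriv_eq_sub
    _ = ∫ y in θ a..θ b, h y := by simp [H]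

theorem eqOn_exp_integral_smul_of_ae_hasDerivAt {V : Type*} [NormedAddCommGroup V]
    [NormedSpace ℂ V] {z : ℝ → V} {κ : ℝ → ℂ} (hκ : IntervalIntegrable κ volume a b)
    (hz : AbsolutelyContinuousOnInterval z a b)
    (hz' : ∀ᵐ x, x ∈ uIcc a b → HasDerivAt z (κ x • z x) x) :
    EqOn z (fun x => Complex.exp (∫ t in a..x, κ t) • z a) (uIcc a b) := by
  set P : ℝ → ℂ := fun x => ∫ t in a..x, κ t
  have hP : AbsolutelyContinuousOnInterval P a b := absolutelyContinuousOnInterval_integral hκ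
  have hE : AbsolutelyContinuousOnInterval (fun x => Complex.exp (-P x)) a b :=
    absolutelyContinuousOnInterval_comp_of_contDiff (G := fun w : ℂ => Complex.exp (-w))
      (by fun_prop) hP
  obtain ⟨C, hC⟩ := (hE.fun_smul hz).const_of_ae_hasDerivAt_zero <| by
    filter_upwards [hκ.ae_hasDerivAt_integral, hz'] with x hPx hzx hx
    have hEx := (hPx hx a left_mem_uIcc).fun_neg.cexp
    refine (hEx.smul (hzx hx)).congr_deriv ?_
    rw [smul_smul, mul_neg, neg_smul, add_neg_cancel]
  have hCa : z a = C := by simpa [P] using hC a left_mem_uIcc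
  intro x hx
  simp only [hCa, ← hC x hx, smul_smul, ← Complex.exp_add, P]
  simp

end AbsolutelyContinuous

namespace IsSolOn

variable {a u v : ℝ → ℝ} {c d : ℝ}

theorem continuousOn (h : IsSolOn a u v c d) : ContinuousOn u (Icc c d) :=
  fun x hx => (h.1 x hx).continuousWithinAt

theorem hasDerivAt {x : ℝ} (h : IsSolOn a u v c d) (hx : x ∈ Ioo c d) : HasDerivAt u (v x) x :=
  (h.1 x (Ioo_subset_Icc_self hx)).hasDerivAt (Icc_mem_nhds hx.1 hx.2)

theorem intervalIntegrable_mul (h : IsSolOn a u v c d) (hcd : c ≤ d)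
    (ha : IntervalIntegrable a volume c d) :
    IntervalIntegrable (fun x => a x * u x) volume c d :=
  ha.mul_continuousOn (by rw [uIcc_of_le hcd]; exact h.continuousOn)

theorem absolutelyContinuousOnInterval_deriv (h : IsSolOn a u v c d) (hcd : c ≤ d)
    (ha : IntervalIntegrable a volume c d) : AbsolutelyContinuousOnInterval v c d := by
  refine absolutelyContinuousOnInterval_of_dist_le (K := 1)
    (absolutelyContinuousOnInterval_integral (h.intervalIntegrable_mul hcd ha)) ?_
  rw [uIcc_of_le hcd]
  intro x hx y hy
  rw [h.2 x hx, h.2 y hy, dist_sub_left, one_mul]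

theorem absolutelyContinuousOnInterval (h : IsSolOn a u v c d) (hcd : c ≤ d)
    (ha : IntervalIntegrable a volume c d) : AbsolutelyContinuousOnInterval u c d := by
  obtain ⟨C, hC⟩ := (h.absolutelyContinuousOnInterval_deriv hcd ha).exists_bound
  rw [uIcc_of_le hcd] at hC
  refine LipschitzOnWith.absolutelyContinuousOnInterval (K := C.toNNReal) ?_
  rw [uIcc_of_le hcd]
  refine (convex_Icc c d).lipschitzOnWith_of_nnnorm_hasDerivWithin_le h.1 fun x hx => ?_
  rw [← NNReal.coe_le_coe, coe_nnnorm]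
  exact (hC x hx).trans (le_coe_toNNReal C)

theorem ae_hasDerivAt_deriv (h : IsSolOn a u v c d) (hcd : c ≤ d)
    (ha : IntervalIntegrable a volume c d) :
    ∀ᵐ x, x ∈ Ioo c d → HasDerivAt v (-(a x * u x)) x := by
  filter_upwards [(h.intervalIntegrable_mul hcd ha).ae_hasDerivAt_integral] with x hx hxcd
  refine ((hx ?_ c left_mem_uIcc).const_sub (v c)).congr_of_eventuallyEq ?_
  · rw [uIcc_of_le hcd]; exact Ioo_subset_Icc_self hxcd
  · filter_upwards [Icc_mem_nhds hxcd.1 hxcd.2] with y hy using h.2 y hy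

end IsSolOn

theorem ae_mem_Ioo_of_mem_uIcc {c d : ℝ} (hcd : c ≤ d) : ∀ᵐ x, x ∈ uIcc c d → x ∈ Ioo c d := by
  rw [uIcc_of_le hcd, ← ae_restrict_iff' measurableSet_Icc, ← restrict_Ioo_eq_restrict_Icc]
  exact ae_restrict_mem measurableSet_Ioo

section Prufer

/-- The phase-plane curve `u' + iωu` of a function `u` with derivative `v`. Its argument is the
Prüfer angle of `u`, normalised so that it grows at rate `ω` when `u'' + ω²u = 0`. -/
noncomputable def phase (ω : ℝ) (u v : ℝ → ℝ) (x : ℝ) : ℂ := v x + ω * Complex.I * u x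

/-- The logarithmic derivative of `phase ω u v` when `u'' + a u = 0`. Where the phase vanishes so
does `u`, and division by zero gives the value `iω`. -/
noncomputable def phaseRate (ω : ℝ) (a u v : ℝ → ℝ) (x : ℝ) : ℂ :=
  ω * Complex.I - (a x - ω ^ 2 : ℝ) * (u x / phase ω u v x)

variable {ω c d : ℝ} {a u v : ℝ → ℝ}

theorem mul_le_norm_phase (ω : ℝ) (u v : ℝ → ℝ) (x : ℝ) : |ω * u x| ≤ ‖phase ω u v x‖ := by
  simpa [phase] using Complex.abs_im_le_norm (phase ω u v x)

theorem norm_div_phase_le (hω : 0 < ω) (u v : ℝ → ℝ) (x : ℝ) :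
    ‖(u x : ℂ) / phase ω u v x‖ ≤ ω⁻¹ := by
  have := mul_le_norm_phase ω u v x
  rw [abs_mul, abs_of_pos hω] at this
  rw [norm_div, Complex.norm_real, norm_eq_abs]
  refine div_le_of_le_mul₀ (norm_nonneg _) (by positivity) ?_
  rwa [inv_mul_eq_div, le_div_iff₀' hω]

theorem phaseRate_mul_phase (hω : 0 < ω) (a u v : ℝ → ℝ) (x : ℝ) :
    phaseRate ω a u v x * phase ω u v x = -(a x * u x) + ω * Complex.I * v x := by
  have hdiv : (u x : ℂ) / phase ω u v x * phase ω u v x = u x := by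
    refine div_mul_cancel_of_imp fun h => ?_
    have := mul_le_norm_phase ω u v x
    rw [h, norm_zero, abs_nonpos_iff] at this
    exact_mod_cast (mul_eq_zero.1 this).resolve_left hω.ne'
  rw [phaseRate, sub_mul, mul_assoc _ (_ / _), hdiv, phase]
  push_cast
  linear_combination (ω ^ 2 * u x : ℂ) * Complex.I_sq

theorem phaseRate_im (hω : 0 < ω) {r θ x : ℝ} (hr : r ≠ 0)
    (hphase : phase ω u v x = r * Complex.exp (θ * Complex.I)) :
    (phaseRate ω a u v x).im = ω + (a x - ω ^ 2) / ω * sin θ ^ 2 := by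
  have hu : u x = r * sin θ / ω := by
    have := congrArg Complex.im hphase
    rw [eq_div_iff hω.ne', mul_comm]
    simpa [phase, Complex.exp_ofReal_mul_I_im] using this
  have hquot : (u x : ℂ) / phase ω u v x =
      (sin θ / ω : ℝ) * Complex.exp ((-θ : ℝ) * Complex.I) := by
    rw [hphase, hu, div_eq_iff (by simp [hr]), mul_assoc, mul_left_comm _ (r : ℂ),
      ← Complex.exp_add]
    push_cast
    simp only [neg_mul, neg_add_cancel, Complex.exp_zero, mul_one]
    ring
  rw [phaseRate, hquot, Complex.sub_im, Complex.im_ofReal_mul, Complex.im_ofReal_mul,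
    Complex.im_ofReal_mul, Complex.exp_ofReal_mul_I_im, Complex.I_im, sin_neg]
  ring

theorem intervalIntegrable_phaseRate (hω : 0 < ω) (hcd : c ≤ d) (h : IsSolOn a u v c d)
    (ha : IntervalIntegrable a volume c d) :
    IntervalIntegrable (phaseRate ω a u v) volume c d := by
  have hu := (h.absolutelyContinuousOnInterval hcd ha).continuousOn
  have hv := (h.absolutelyContinuousOnInterval_deriv hcd ha).continuousOn
  have hmeas : AEStronglyMeasurable (fun x => (u x : ℂ) / phase ω u v x)
      (volume.restrict (uIoc c d)) := by
    have hphase : ContinuousOn (phase ω u v) (uIcc c d) := by unfold phase; fun_prop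
    have hu' : ContinuousOn (fun x => (u x : ℂ)) (uIcc c d) := by fun_prop
    exact ((hu'.mono uIoc_subset_uIcc).aemeasurable measurableSet_uIoc).div
      ((hphase.mono uIoc_subset_uIcc).aemeasurable measurableSet_uIoc) |>.aestronglyMeasurable
  have ha' : IntervalIntegrable (fun x => ((a x - ω ^ 2 : ℝ) : ℂ)) volume c d := by
    rw [intervalIntegrable_iff] at ha ⊢
    exact (ha.sub intervalIntegrable_const.def').ofReal
  refine intervalIntegrable_const.sub ?_
  rw [intervalIntegrable_iff] at ha' ⊢
  exact ha'.mul_bdd hmeas (.of_forall fun x => norm_div_phase_le hω u v x)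

theorem absolutelyContinuousOnInterval_phase (hcd : c ≤ d) (h : IsSolOn a u v c d)
    (ha : IntervalIntegrable a volume c d) :
    AbsolutelyContinuousOnInterval (phase ω u v) c d := by
  have hofReal : ∀ {f : ℝ → ℝ}, AbsolutelyContinuousOnInterval f c d →
      AbsolutelyContinuousOnInterval (fun x => (f x : ℂ)) c d := fun hf =>
    absolutelyContinuousOnInterval_comp_of_contDiff Complex.ofRealCLM.contDiff hf
  exact (hofReal (h.absolutelyContinuousOnInterval_deriv hcd ha)).fun_add
    ((hofReal (h.absolutelyContinuousOnInterval hcd ha)).const_smul (ω * Complex.I))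

theorem ae_hasDerivAt_phase (hω : 0 < ω) (hcd : c ≤ d) (h : IsSolOn a u v c d)
    (ha : IntervalIntegrable a volume c d) :
    ∀ᵐ x, x ∈ uIcc c d →
      HasDerivAt (phase ω u v) (phaseRate ω a u v x * phase ω u v x) x := by
  filter_upwards [h.ae_hasDerivAt_deriv hcd ha, ae_mem_Ioo_of_mem_uIcc hcd] with x hv hIoo hx
  rw [phaseRate_mul_phase hω]
  have hu := (h.hasDerivAt (hIoo hx)).ofReal_comp.const_mul (ω * Complex.I)
  exact_mod_cast (hv (hIoo hx)).ofReal_comp.add hu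

theorem phase_eq_exp_integral_mul (hω : 0 < ω) (hcd : c ≤ d) (h : IsSolOn a u v c d)
    (ha : IntervalIntegrable a volume c d) {x : ℝ} (hx : x ∈ Icc c d) :
    phase ω u v x = Complex.exp (∫ t in c..x, phaseRate ω a u v t) * phase ω u v c :=
  eqOn_exp_integral_smul_of_ae_hasDerivAt (intervalIntegrable_phaseRate hω hcd h ha)
    (absolutelyContinuousOnInterval_phase hcd h ha) (ae_hasDerivAt_phase hω hcd h ha)
    (Icc_subset_uIcc hx)

theorem phase_ne_zero (hω : 0 < ω) {x : ℝ} (hu : u x ≠ 0) (v : ℝ → ℝ) : phase ω u v x ≠ 0 := by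
  rw [← norm_pos_iff]
  exact (abs_pos.2 (mul_ne_zero hω.ne' hu)).trans_le (mul_le_norm_phase ω u v x)

/-- `θ` is a Prüfer angle on `[c, d]` for the potential `a` at frequency `ω`: an absolutely
continuous solution of `θ' = ω + (a - ω²)/ω · sin²θ`. -/
def IsPruferAngle (ω : ℝ) (a θ : ℝ → ℝ) (c d : ℝ) : Prop :=
  AbsolutelyContinuousOnInterval θ c d ∧
    ∀ᵐ x, x ∈ uIcc c d → HasDerivAt θ (ω + (a x - ω ^ 2) / ω * sin (θ x) ^ 2) x

theorem exists_isPruferAngle (hω : 0 < ω) (hcd : c ≤ d) (h : IsSolOn a u v c d)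
    (ha : IntervalIntegrable a volume c d) (hne : ∃ x ∈ Icc c d, u x ≠ 0) :
    ∃ r θ : ℝ → ℝ, IsPruferAngle ω a θ c d ∧
      ∀ x ∈ Icc c d, 0 < r x ∧ v x = r x * cos (θ x) ∧ ω * u x = r x * sin (θ x) := by
  set κ := phaseRate ω a u v
  set P : ℝ → ℂ := fun x => ∫ t in c..x, κ t
  set z := phase ω u v
  have hκ : IntervalIntegrable κ volume c d := intervalIntegrable_phaseRate hω hcd h ha
  have hz : ∀ x ∈ Icc c d, z x = Complex.exp (P x) * z c := fun x hx =>
    phase_eq_exp_integral_mul hω hcd h ha hx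
  have hzc : z c ≠ 0 := by
    obtain ⟨x, hx, hux⟩ := hne
    have hzx := phase_ne_zero hω hux v
    rw [phase_eq_exp_integral_mul hω hcd h ha hx] at hzx
    exact right_ne_zero_of_mul hzx
  set r : ℝ → ℝ := fun x => ‖z c‖ * exp (P x).re
  set θ : ℝ → ℝ := fun x => Complex.arg (z c) + (P x).im
  have hr : ∀ x, 0 < r x := fun x => by positivity
  have hpolar : ∀ x ∈ Icc c d, z x = r x * Complex.exp (θ x * Complex.I) := by
    intro x hx
    calc z x = Complex.exp ((P x).re + (P x).im * Complex.I) *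
          (‖z c‖ * Complex.exp (Complex.arg (z c) * Complex.I)) := by
          rw [Complex.re_add_im, Complex.norm_mul_exp_arg_mul_I, hz x hx]
      _ = r x * Complex.exp (θ x * Complex.I) := by
          simp only [r, θ, Complex.ofReal_mul, Complex.ofReal_add, Complex.ofReal_exp,
            Complex.exp_add, add_mul]
          ring
  refine ⟨r, θ, ⟨?_, ?_⟩, fun x hx => ⟨hr x, ?_, ?_⟩⟩
  · exact absolutelyContinuousOnInterval_comp_of_contDiff (G := fun w : ℂ => _ + w.im)
      (contDiff_const.add Complex.imCLM.contDiff) (absolutelyContinuousOnInterval_integral hκ)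
  · filter_upwards [hκ.ae_hasDerivAt_integral] with x hP hx
    rw [← phaseRate_im hω (hr x).ne' (hpolar x (by rwa [uIcc_of_le hcd] at hx))]
    exact (Complex.imCLM.hasFDerivAt.comp_hasDerivAt x (hP hx c left_mem_uIcc)).const_add _
  · simpa [z, phase, Complex.exp_ofReal_mul_I_re] using congrArg Complex.re (hpolar x hx)
  · simpa [z, phase, Complex.exp_ofReal_mul_I_im] using congrArg Complex.im (hpolar x hx)

end Prufer

namespace IsPruferAngle

variable {ω c d : ℝ} {a θ : ℝ → ℝ}

theorem ae_deriv_eq (h : IsPruferAngle ω a θ c d) :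
    ∀ᵐ x, x ∈ uIcc c d → deriv θ x = ω + (a x - ω ^ 2) / ω * sin (θ x) ^ 2 := by
  filter_upwards [h.2] with x hx hxcd using (hx hxcd).deriv

theorem ae_le_deriv (h : IsPruferAngle ω a θ c d) (hω : 0 < ω)
    (ha : ∀ᵐ x ∂volume.restrict (Icc c d), ω ^ 2 ≤ a x) :
    ∀ᵐ x ∂volume.restrict (Icc c d), ω ≤ deriv θ x := by
  filter_upwards [ha, ae_restrict_of_ae h.ae_deriv_eq, ae_restrict_mem measurableSet_Icc]
    with x hax hder hx
  rw [hder (Icc_subset_uIcc hx)]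
  have : 0 ≤ a x - ω ^ 2 := sub_nonneg.2 hax
  exact le_add_of_nonneg_right (by positivity)

theorem mul_sub_le_sub (h : IsPruferAngle ω a θ c d) (hω : 0 < ω)
    (ha : ∀ᵐ x ∂volume.restrict (Icc c d), ω ^ 2 ≤ a x) {x y : ℝ} (hx : x ∈ Icc c d)
    (hy : y ∈ Icc c d) (hxy : x ≤ y) : ω * (y - x) ≤ θ y - θ x := by
  have hθ : AbsolutelyContinuousOnInterval θ x y :=
    h.1.mono (uIcc_subset_uIcc (Icc_subset_uIcc hx) (Icc_subset_uIcc hy))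
  calc ω * (y - x) = ∫ _ in x..y, ω := by simp [mul_comm]
    _ ≤ ∫ t in x..y, deriv θ t :=
        intervalIntegral.integral_mono_ae_restrict hxy intervalIntegrable_const
          hθ.intervalIntegrable_deriv
          (ae_restrict_of_ae_restrict_of_subset (Icc_subset_Icc hx.1 hy.2) (h.ae_le_deriv hω ha))
    _ = θ y - θ x := hθ.integral_deriv_eq_sub

theorem injOn (h : IsPruferAngle ω a θ c d) (hω : 0 < ω)
    (ha : ∀ᵐ x ∂volume.restrict (Icc c d), ω ^ 2 ≤ a x) : InjOn θ (Icc c d) := by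
  refine StrictMonoOn.injOn fun x hx y hy hxy => ?_
  have := h.mul_sub_le_sub hω ha hx hy hxy.le
  nlinarith [mul_pos hω (sub_pos.2 hxy)]

theorem volume_sin_eq_zero (h : IsPruferAngle ω a θ c d) (hω : 0 < ω)
    (ha : ∀ᵐ x ∂volume.restrict (Icc c d), ω ^ 2 ≤ a x) :
    volume {x ∈ Icc c d | sin (θ x) = 0} = 0 := by
  have hzeros : {y : ℝ | sin y = 0}.Countable :=
    (countable_range fun k : ℤ => (k : ℝ) * π).mono fun y hy => sin_eq_zero_iff.1 hy
  refine Set.Countable.measure_zero ?_ volume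
  exact MapsTo.countable_of_injOn (fun x hx => hx.2)
    ((h.injOn hω ha).mono fun x hx => hx.1) hzeros

theorem mul_sub_lt_sub (h : IsPruferAngle ω a θ c d) (hω : 0 < ω) (hcd : c < d)
    (ha : ∀ᵐ x ∂volume.restrict (Icc c d), ω ^ 2 ≤ a x)
    (ha' : 0 < volume {x ∈ Icc c d | ω ^ 2 < a x}) : ω * (d - c) < θ d - θ c := by
  have hlt : volume.restrict (Ioc c d) {x | ω < deriv θ x} ≠ 0 := by
    rw [restrict_Ioc_eq_restrict_Icc]
    refine mt (fun hnull => ?_) ha'.ne'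
    rw [measure_eq_zero_iff_ae_notMem] at hnull ⊢
    rw [ae_restrict_iff' measurableSet_Icc] at hnull
    filter_upwards [hnull, h.ae_deriv_eq,
      measure_eq_zero_iff_ae_notMem.1 (h.volume_sin_eq_zero hω ha)] with x hx hder hsin ⟨hxcd, hax⟩
    refine hx hxcd ?_
    have hsinx : sin (θ x) ≠ 0 := fun h0 => hsin ⟨hxcd, h0⟩
    have : 0 < a x - ω ^ 2 := sub_pos.2 hax
    rw [hder (Icc_subset_uIcc hxcd)]
    exact lt_add_of_pos_right _ (by positivity)
  calc ω * (d - c) = ∫ _ in c..d, ω := by simp [mul_comm]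
    _ < ∫ x in c..d, deriv θ x :=
        intervalIntegral.integral_lt_integral_of_ae_le_of_measure_setOfPred_lt_ne_zero hcd.le
          intervalIntegrable_const h.1.intervalIntegrable_deriv
          (ae_restrict_of_ae_restrict_of_subset Ioc_subset_Icc_self (h.ae_le_deriv hω ha)) hlt
    _ = θ d - θ c := h.1.integral_deriv_eq_sub

end IsPruferAngle

theorem exists_int_sub_eq_two_pi_mul {r s θ ψ : ℝ} (hr : 0 < r) (hs : 0 < s)
    (hcos : r * cos θ = s * cos ψ) (hsin : r * sin θ = s * sin ψ) :
    ∃ k : ℤ, θ - ψ = 2 * π * k := by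
  have hrs : r = s := by
    rw [← pow_left_inj₀ hr.le hs.le two_ne_zero]
    calc r ^ 2 = (r * cos θ) ^ 2 + (r * sin θ) ^ 2 := by
          linear_combination -r ^ 2 * sin_sq_add_cos_sq θ
      _ = s ^ 2 := by
          rw [hcos, hsin]; linear_combination s ^ 2 * sin_sq_add_cos_sq ψ
  subst hrs
  exact Real.Angle.angle_eq_iff_two_pi_dvd_sub.1 <|
    Real.Angle.cos_sin_inj (mul_left_cancel₀ hr.ne' hcos) (mul_left_cancel₀ hr.ne' hsin)

section Calibration

/-- The weight `θ ↦ min (1 / sin²θ) (1 / sin²α)`, written as the inverse of a maximum so that the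
zeros of `sin θ` need no exception. Integrating a Prüfer equation against it bounds the excess of
the potential over `ω²` from below. -/
noncomputable def calibration (α θ : ℝ) : ℝ := (max (sin θ ^ 2) (sin α ^ 2))⁻¹

variable {α : ℝ}

theorem calibration_periodic (α : ℝ) : Function.Periodic (calibration α) π := fun θ => by
  simp only [calibration, sin_add_pi, neg_sq]

theorem continuous_calibration (hα : sin α ≠ 0) : Continuous (calibration α) :=
  Continuous.inv₀ (by fun_prop) fun _ => (lt_max_of_lt_right (by positivity)).ne'

theorem calibration_le (hα : sin α ≠ 0) (θ : ℝ) : calibration α θ ≤ (sin α ^ 2)⁻¹ :=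
  inv_anti₀ (by positivity) (le_max_right _ _)

theorem calibration_mul_sin_sq_le (α θ : ℝ) : calibration α θ * sin θ ^ 2 ≤ 1 := by
  rw [calibration, inv_mul_eq_div]
  exact div_le_one_of_le₀ (le_max_left _ _) (le_max_of_le_left (sq_nonneg _))

theorem hasDerivAt_neg_cot {x : ℝ} (hx : sin x ≠ 0) :
    HasDerivAt (fun y => -cot y) (sin x ^ 2)⁻¹ x := by
  have := ((hasDerivAt_cos x).div (hasDerivAt_sin x) hx).fun_neg
  simp only [Real.cot_eq_cos_div_sin]
  refine this.congr_deriv ?_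
  field_simp
  linear_combination sin_sq_add_cos_sq x

theorem integral_calibration_plateau (hα : α ∈ Icc 0 (π / 2)) :
    ∫ x in -α..α, calibration α x = 2 * α / sin α ^ 2 := by
  calc ∫ x in -α..α, calibration α x = ∫ _ in -α..α, (sin α ^ 2)⁻¹ := by
        refine intervalIntegral.integral_congr fun x hx => ?_
        rw [uIcc_of_le (by linarith [hα.1, pi_pos])] at hx
        have hle : sin x ≤ sin α :=
          sin_le_sin_of_le_of_le_pi_div_two (by linarith [hx.1, hα.2]) hα.2 hx.2
        have hge : sin (-α) ≤ sin x :=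
          sin_le_sin_of_le_of_le_pi_div_two (by linarith [hα.2]) (by linarith [hx.2, hα.2]) hx.1
        rw [sin_neg] at hge
        exact congrArg _ (max_eq_right (sq_le_sq' hge hle))
    _ = 2 * α / sin α ^ 2 := by
        rw [intervalIntegral.integral_const, smul_eq_mul]; ring

theorem integral_calibration_cosecant (hα : α ∈ Ioc 0 (π / 2)) :
    ∫ x in α..π - α, calibration α x = 2 * cot α := by
  have hαpos : 0 < sin α := sin_pos_of_pos_of_lt_pi hα.1 (by linarith [hα.2, pi_pos])
  have hsin : ∀ x ∈ uIcc α (π - α), sin α ≤ sin x := by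
    intro x hx
    rw [uIcc_of_le (by linarith [hα.2])] at hx
    rcases le_total x (π / 2) with h | h
    · exact sin_le_sin_of_le_of_le_pi_div_two (by linarith [hα.1, pi_pos]) h hx.1
    · rw [← sin_pi_sub x]
      exact sin_le_sin_of_le_of_le_pi_div_two (by linarith [hα.1, pi_pos]) (by linarith)
        (by linarith [hx.2])
  have hderiv : ∀ x ∈ uIcc α (π - α), HasDerivAt (fun y => -cot y) (calibration α x) x := by
    intro x hx
    rw [calibration, max_eq_left (pow_le_pow_left₀ hαpos.le (hsin x hx) 2)]
    exact hasDerivAt_neg_cot (hαpos.trans_le (hsin x hx)).ne'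
  rw [intervalIntegral.integral_eq_sub_of_hasDerivAt hderiv
    ((continuous_calibration hαpos.ne').intervalIntegrable _ _)]
  simp only [Real.cot_eq_cos_div_sin, cos_pi_sub, sin_pi_sub]
  ring

theorem integral_calibration (hα : α ∈ Ioc 0 (π / 2)) :
    ∫ x in (0 : ℝ)..π, calibration α x = 2 * α / sin α ^ 2 + 2 * cot α := by
  have hcont : Continuous (calibration α) := continuous_calibration
    (sin_pos_of_pos_of_lt_pi hα.1 (by linarith [hα.2, pi_pos])).ne'
  calc ∫ x in (0 : ℝ)..π, calibration α x = ∫ x in -α..π - α, calibration α x := by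
        have := (calibration_periodic α).intervalIntegral_add_eq 0 (-α)
        rwa [zero_add, neg_add_eq_sub] at this
    _ = (∫ x in -α..α, calibration α x) + ∫ x in α..π - α, calibration α x :=
        (intervalIntegral.integral_add_adjacent_intervals
          (hcont.intervalIntegrable _ _) (hcont.intervalIntegrable _ _)).symm
    _ = 2 * α / sin α ^ 2 + 2 * cot α := by
        rw [integral_calibration_plateau (Ioc_subset_Icc_self hα),
          integral_calibration_cosecant hα]

theorem integral_calibration_add_nat_mul_pi (hα : α ∈ Ioc 0 (π / 2)) (β : ℝ) (L : ℕ) :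
    ∫ x in β..β + L * π, calibration α x = L * (2 * α / sin α ^ 2 + 2 * cot α) := by
  have hcont : Continuous (calibration α) := continuous_calibration
    (sin_pos_of_pos_of_lt_pi hα.1 (by linarith [hα.2, pi_pos])).ne'
  have hper := calibration_periodic α
  have := hper.intervalIntegral_add_zsmul_eq L β fun _ _ => hcont.intervalIntegrable _ _
  rw [hper.intervalIntegral_add_eq β 0, zero_add, integral_calibration hα] at this
  simpa only [zsmul_eq_mul, Int.cast_natCast] using this

end Calibration

theorem IsPruferAngle.winding_le_integral {ω c d α : ℝ} {a θ : ℝ → ℝ} {L : ℕ}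
    (h : IsPruferAngle ω a θ c d) (hω : 0 < ω) (hcd : c ≤ d) (ha : IntervalIntegrable a volume c d)
    (ha' : ∀ᵐ x ∂volume.restrict (Icc c d), ω ^ 2 ≤ a x) (hL : θ d = θ c + L * π)
    (hα : α ∈ Ioc 0 (π / 2)) :
    ω * L * (2 * α / sin α ^ 2 + 2 * cot α) ≤
      (∫ x in c..d, (a x - ω ^ 2)) + ω ^ 2 * (d - c) / sin α ^ 2 := by
  have hsin : sin α ≠ 0 := (sin_pos_of_pos_of_lt_pi hα.1 (by linarith [hα.2, pi_pos])).ne'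
  have hcont := continuous_calibration hsin
  have hexcess : IntervalIntegrable (fun x => a x - ω ^ 2) volume c d :=
    ha.sub intervalIntegrable_const
  have hpointwise : ∀ᵐ x ∂volume.restrict (Icc c d),
      ω * (calibration α (θ x) * deriv θ x) ≤ (a x - ω ^ 2) + ω ^ 2 * (sin α ^ 2)⁻¹ := by
    filter_upwards [ha', ae_restrict_of_ae h.ae_deriv_eq, ae_restrict_mem measurableSet_Icc]
      with x hax hder hx
    have : 0 ≤ a x - ω ^ 2 := sub_nonneg.2 hax
    rw [hder (Icc_subset_uIcc hx)]
    calc ω * (calibration α (θ x) * (ω + (a x - ω ^ 2) / ω * sin (θ x) ^ 2))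
        = (a x - ω ^ 2) * (calibration α (θ x) * sin (θ x) ^ 2) + ω ^ 2 * calibration α (θ x) := by
          field_simp; ring
      _ ≤ (a x - ω ^ 2) * 1 + ω ^ 2 * (sin α ^ 2)⁻¹ := by
          gcongr
          · exact calibration_mul_sin_sq_le α _
          · exact calibration_le hsin _
      _ = (a x - ω ^ 2) + ω ^ 2 * (sin α ^ 2)⁻¹ := by rw [mul_one]
  calc ω * L * (2 * α / sin α ^ 2 + 2 * cot α)
      = ∫ x in c..d, ω * (calibration α (θ x) * deriv θ x) := by
        rw [intervalIntegral.integral_const_mul,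
          integral_comp_mul_deriv_of_absolutelyContinuousOnInterval hcont h.1, hL,
          integral_calibration_add_nat_mul_pi hα, mul_assoc]
    _ ≤ ∫ x in c..d, ((a x - ω ^ 2) + ω ^ 2 * (sin α ^ 2)⁻¹) := by
        refine intervalIntegral.integral_mono_ae_restrict hcd ?_
          (hexcess.add intervalIntegrable_const) hpointwise
        exact (h.1.intervalIntegrable_deriv.continuousOn_mul
          (hcont.comp_continuousOn h.1.continuousOn)).const_mul ω
    _ = (∫ x in c..d, (a x - ω ^ 2)) + ω ^ 2 * (d - c) / sin α ^ 2 := by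
        rw [intervalIntegral.integral_add hexcess intervalIntegrable_const,
          intervalIntegral.integral_const, smul_eq_mul]
        ring

theorem IsPruferAngle.two_mul_cot_le_integral {ω c d : ℝ} {a θ : ℝ → ℝ} {K L : ℕ}
    (h : IsPruferAngle ω a θ c d) (hω : 0 < ω) (hcd : c < d) (ha : IntervalIntegrable a volume c d)
    (ha' : ∀ᵐ x ∂volume.restrict (Icc c d), ω ^ 2 ≤ a x) (hL : θ d = θ c + L * π) (hKL : K ≤ L)
    (hK : ω * (d - c) ≤ K * π) :
    2 * ω * K * cot (ω * (d - c) / (2 * K)) ≤ ∫ x in c..d, (a x - ω ^ 2) := by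
  have hlen : 0 < ω * (d - c) := mul_pos hω (sub_pos.2 hcd)
  have hKpos : (0 : ℝ) < K := pos_of_mul_pos_left (hlen.trans_le hK) pi_pos.le
  set α := ω * (d - c) / (2 * K) with hα_def
  have hα : α ∈ Ioc 0 (π / 2) := by
    refine ⟨by positivity, ?_⟩
    rw [div_le_div_iff₀ (by positivity) two_pos]
    linarith
  have hbracket : 0 ≤ 2 * α / sin α ^ 2 + 2 * cot α := by
    have hsin : 0 ≤ sin α := sin_nonneg_of_nonneg_of_le_pi hα.1.le (by linarith [hα.2, pi_pos])
    have hcos : 0 ≤ cos α := cos_nonneg_of_neg_pi_div_two_le_of_le (by linarith [hα.1, pi_pos]) hα.2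
    have := hα.1.le
    rw [Real.cot_eq_cos_div_sin]
    positivity
  have hplateau : ω * K * (2 * α / sin α ^ 2) = ω ^ 2 * (d - c) / sin α ^ 2 := by
    rw [← mul_div_assoc]
    congr 1
    rw [hα_def]
    field_simp
  have hwind : ω * K * (2 * α / sin α ^ 2 + 2 * cot α) ≤
      ω * L * (2 * α / sin α ^ 2 + 2 * cot α) := by gcongr
  have hbound := h.winding_le_integral hω hcd.le ha ha' hL hα
  linear_combination hwind + hbound - hplateau

section Periodic

variable {T : ℝ} {n : ℕ} {a u v : ℝ → ℝ}

theorem MemLT.intervalIntegrable (ha : MemLT T a) (hT : 0 ≤ T) :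
    IntervalIntegrable a volume 0 T :=
  (intervalIntegrable_iff_integrableOn_Icc_of_le hT).2 ha.2.2

theorem Prec.integral_abs_sub {b : ℝ → ℝ} (h : Prec T b a) (hT : 0 ≤ T) :
    ∫ x in 0..T, |a x - b x| = ∫ x in 0..T, (a x - b x) := by
  refine intervalIntegral.integral_congr_ae_restrict ?_
  rw [uIoc_of_le hT]
  filter_upwards [ae_restrict_of_ae_restrict_of_subset Ioc_subset_Icc_self h.1] with x hx
  exact abs_of_nonneg (sub_nonneg.2 hx)

theorem PeriodicSol.exists_winding {ω : ℝ} (h : PeriodicSol T a u v) (hT : 0 < T)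
    (hω : 0 < ω) (hωT : ω * T = 2 * π * n) (ha : IntervalIntegrable a volume 0 T)
    (hprec : Prec T (fun _ => ω ^ 2) a) (hne : ∃ x ∈ Icc 0 T, u x ≠ 0) :
    ∃ θ : ℝ → ℝ, ∃ k : ℕ, n + 1 ≤ k ∧ IsPruferAngle ω a θ 0 T ∧
      θ T = θ 0 + (2 * k : ℕ) * π := by
  obtain ⟨hsol, hu, hv⟩ := h
  obtain ⟨r, θ, hθ, hpolar⟩ := exists_isPruferAngle hω hT.le hsol ha hne
  obtain ⟨hr0, hcos0, hsin0⟩ := hpolar 0 (left_mem_Icc.2 hT.le)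
  obtain ⟨hrT, hcosT, hsinT⟩ := hpolar T (right_mem_Icc.2 hT.le)
  obtain ⟨k, hk⟩ := exists_int_sub_eq_two_pi_mul hrT hr0 (by rw [← hcosT, ← hcos0, hv])
    (by rw [← hsinT, ← hsin0, hu])
  have hnk : (n : ℤ) < k := by
    have hrot := hθ.mul_sub_lt_sub hω hT hprec.1 hprec.2
    rw [sub_zero, hωT, hk] at hrot
    exact_mod_cast lt_of_mul_lt_mul_left hrot two_pi_pos.le
  lift k to ℕ using by omega
  refine ⟨θ, k, by omega, hθ, ?_⟩
  push_cast at hk ⊢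
  linear_combination hk

theorem lam_eq_sq (T : ℝ) (n : ℕ) : lam T n = (2 * π * n / T) ^ 2 := by
  rw [lam]; ring

theorem beta1_eq (T : ℝ) (n : ℕ) :
    beta1 T n = 2 * (2 * π * n / T) * (2 * (n + 1)) * cot (π * n / (2 * (n + 1))) := by
  rw [beta1, mul_comm (n : ℝ) π]; ring

theorem beta1_le_integral (hT : 0 < T) (hn : 1 ≤ n) (ha : a ∈ LambdaN T n) :
    beta1 T n ≤ ∫ x in 0..T, |a x - lam T n| := by
  obtain ⟨hmem, hprec, u, v, hper, hne⟩ := ha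
  have hint := hmem.intervalIntegrable hT.le
  rw [hprec.integral_abs_sub hT.le]
  rw [lam_eq_sq] at hprec ⊢
  set ω := 2 * π * n / T
  have : (0 : ℝ) < n := by exact_mod_cast hn
  have hω : 0 < ω := by positivity
  have hωT : ω * T = 2 * π * n := div_mul_cancel₀ _ hT.ne'
  obtain ⟨θ, k, hk, hθ, hθT⟩ := hper.exists_winding hT hω hωT hint hprec hne
  have hbound := hθ.two_mul_cot_le_integral (K := 2 * (n + 1)) hω hT hint hprec.1 hθT
    (by omega) (by push_cast; linarith [pi_pos])
  have hangle : ω * (T - 0) / (2 * (2 * (n + 1) : ℕ)) = π * n / (2 * (n + 1)) := by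
    rw [sub_zero, hωT]
    push_cast
    field_simp
  rw [hangle] at hbound
  calc beta1 T n = _ := beta1_eq T n
    _ ≤ _ := by exact_mod_cast hbound

end Periodic

namespace IsSolOn

variable {a u v : ℝ → ℝ} {c d e : ℝ}

theorem congr {u' v' : ℝ → ℝ} (h : IsSolOn a u v c d) (hu : EqOn u' u (Icc c d))
    (hv : EqOn v' v (Icc c d)) : IsSolOn a u' v' c d := by
  refine ⟨fun x hx => ?_, fun x hx => ?_⟩
  · rw [hv hx]
    exact (h.1 x hx).congr_of_mem hu hx
  · rw [hv hx, hv (left_mem_Icc.2 (hx.1.trans hx.2)), h.2 x hx]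
    congr 1
    refine intervalIntegral.integral_congr fun t ht => ?_
    rw [uIcc_of_le hx.1] at ht
    simp only [hu (Icc_subset_Icc_right hx.2 ht)]

theorem const_mul (h : IsSolOn a u v c d) (r : ℝ) :
    IsSolOn a (fun x => r * u x) (fun x => r * v x) c d := by
  refine ⟨fun x hx => (h.1 x hx).const_mul r, fun x hx => ?_⟩
  simp only [h.2 x hx, mul_sub, mul_left_comm _ r, intervalIntegral.integral_const_mul]

theorem comp_sub_const (h : IsSolOn a u v c d) (s : ℝ) :
    IsSolOn (fun x => a (x - s)) (fun x => u (x - s)) (fun x => v (x - s)) (c + s) (d + s) := by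
  have hmaps : MapsTo (fun x => x - s) (Icc (c + s) (d + s)) (Icc c d) := fun x hx =>
    ⟨le_sub_iff_add_le.2 hx.1, sub_le_iff_le_add.2 hx.2⟩
  refine ⟨fun x hx => ?_, fun x hx => ?_⟩
  · have hcomp := (h.1 _ (hmaps hx)).comp x ((hasDerivWithinAt_id x _).sub_const s) hmaps
    rwa [mul_one] at hcomp
  · simp only [h.2 _ (hmaps hx), add_sub_cancel_right,
      intervalIntegral.integral_comp_sub_right fun t => a t * u t]

theorem union (h₁ : IsSolOn a u v c e) (h₂ : IsSolOn a u v e d) (hce : c ≤ e) (hed : e ≤ d)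
    (ha : IntervalIntegrable a volume c d) : IsSolOn a u v c d := by
  have he : e ∈ uIcc c d := Icc_subset_uIcc ⟨hce, hed⟩
  refine ⟨fun x _ => ?_, fun x hx => ?_⟩
  · have hpiece : ∀ {s t}, IsSolOn a u v s t → HasDerivWithinAt u (v x) (Icc s t) x := by
      intro s t h
      by_cases hx : x ∈ Icc s t
      · exact h.1 x hx
      · exact HasFDerivWithinAt.of_notMem_closure (by rwa [isClosed_Icc.closure_eq])
    rw [← Icc_union_Icc_eq_Icc hce hed]
    exact (hpiece h₁).union (hpiece h₂)
  · rcases le_total x e with hxe | hex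
    · exact h₁.2 x ⟨hx.1, hxe⟩
    · have hint₁ := h₁.intervalIntegrable_mul hce (ha.mono_set (uIcc_subset_uIcc_left he))
      have hint₂ := h₂.intervalIntegrable_mul hed (ha.mono_set (uIcc_subset_uIcc_right he))
      rw [h₂.2 x ⟨hex, hx.2⟩, h₁.2 e (right_mem_Icc.2 hce), sub_sub,
        intervalIntegral.integral_add_adjacent_intervals hint₁
          (hint₂.mono_set (uIcc_subset_uIcc_left (Icc_subset_uIcc ⟨hex, hx.2⟩)))]

theorem exists_ne_zero (h : IsSolOn a u v c d) (hcd : c < d) (hv : v c ≠ 0) :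
    ∃ x ∈ Icc c d, u x ≠ 0 := by
  by_contra! hzero
  have hc : c ∈ Icc c d := left_mem_Icc.2 hcd.le
  have hconst : HasDerivWithinAt u 0 (Icc c d) c :=
    (hasDerivWithinAt_const c _ (0 : ℝ)).congr_of_mem hzero hc
  exact hv (((uniqueDiffOn_Icc hcd) c hc).eq_deriv _ (h.1 c hc) hconst)

end IsSolOn

theorem isSolOn_sin {a : ℝ → ℝ} {c d κ : ℝ} (ha : ∀ x ∈ Ioo c d, a x = κ ^ 2) (A φ : ℝ) :
    IsSolOn a (fun x => A * sin (κ * x + φ)) (fun x => A * (κ * cos (κ * x + φ))) c d := by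
  have harg : ∀ x, HasDerivAt (fun y => κ * y + φ) κ x := fun x => by
    simpa using ((hasDerivAt_id x).const_mul κ).add_const φ
  refine ⟨fun x _ => ?_, fun x hx => ?_⟩
  · refine (((harg x).sin.const_mul A).congr_deriv ?_).hasDerivWithinAt
    ring
  · have hderiv : ∀ y, HasDerivAt (fun y => A * (κ * cos (κ * y + φ)))
        (-(κ ^ 2 * (A * sin (κ * y + φ)))) y := fun y =>
      (((harg y).cos.const_mul κ).const_mul A).congr_deriv (by ring)
    have hcongr : ∫ t in c..x, a t * (A * sin (κ * t + φ)) =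
        ∫ t in c..x, κ ^ 2 * (A * sin (κ * t + φ)) := by
      refine intervalIntegral.integral_congr_ae ?_
      filter_upwards [ae_mem_Ioo_of_mem_uIcc hx.1] with t ht htx
      have htx' := ht (uIoc_subset_uIcc htx)
      rw [ha t ⟨htx'.1, htx'.2.trans_le hx.2⟩]
    have hFTC := intervalIntegral.integral_eq_sub_of_hasDerivAt (a := c) (b := x)
      (fun y _ => hderiv y) (Continuous.intervalIntegrable (by fun_prop) c x)
    rw [intervalIntegral.integral_neg] at hFTC
    rw [hcongr]
    linarith

/-- Some solution of `u'' + a u = 0` on `[c, d]` carries the Cauchy data `(u, u') = ξ` at `c` to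
`(u, u') = η` at `d`. -/
def CauchyTransfer (a : ℝ → ℝ) (c d : ℝ) (ξ η : ℝ × ℝ) : Prop :=
  ∃ u v : ℝ → ℝ, IsSolOn a u v c d ∧ (u c, v c) = ξ ∧ (u d, v d) = η

namespace CauchyTransfer

variable {a : ℝ → ℝ} {c d e : ℝ} {ξ η ζ : ℝ × ℝ}

theorem refl (a : ℝ → ℝ) (c : ℝ) (ξ : ℝ × ℝ) : CauchyTransfer a c c ξ ξ := by
  refine ⟨fun _ => ξ.1, fun _ => ξ.2, ⟨fun x hx => ?_, fun x hx => ?_⟩, rfl, rfl⟩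
  all_goals
    rw [Icc_self, mem_singleton_iff] at hx
    subst hx
  · rw [Icc_self]
    exact HasFDerivWithinAt.singleton
  · simp

theorem trans (h₁ : CauchyTransfer a c e ξ η) (h₂ : CauchyTransfer a e d η ζ) (hce : c ≤ e)
    (hed : e ≤ d) (ha : IntervalIntegrable a volume c d) : CauchyTransfer a c d ξ ζ := by
  obtain ⟨u₁, v₁, hsol₁, hc, he₁⟩ := h₁
  obtain ⟨u₂, v₂, hsol₂, he₂, hd⟩ := h₂
  have hmatch := he₁.trans he₂.symm
  have hleft : ∀ f g : ℝ → ℝ, EqOn ((Iic e).piecewise f g) f (Icc c e) := fun f g x hx =>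
    piecewise_eq_of_mem _ _ _ hx.2
  have hright : ∀ f g : ℝ → ℝ, f e = g e → EqOn ((Iic e).piecewise f g) g (Icc e d) := by
    intro f g hfg x hx
    rcases hx.1.eq_or_lt with rfl | hex
    · rw [piecewise_eq_of_mem _ _ _ self_mem_Iic, hfg]
    · exact piecewise_eq_of_notMem _ _ _ hex.not_ge
  have hu := hright u₁ u₂ (congrArg Prod.fst hmatch)
  have hv := hright v₁ v₂ (congrArg Prod.snd hmatch)
  have hsol := (hsol₁.congr (hleft u₁ u₂) (hleft v₁ v₂)).union (hsol₂.congr hu hv) hce hed ha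
  refine ⟨_, _, hsol, ?_, ?_⟩
  · rw [hleft _ _ (left_mem_Icc.2 hce), hleft _ _ (left_mem_Icc.2 hce), hc]
  · rw [hu (right_mem_Icc.2 hed), hv (right_mem_Icc.2 hed), hd]

theorem smul (h : CauchyTransfer a c d ξ η) (r : ℝ) : CauchyTransfer a c d (r • ξ) (r • η) := by
  obtain ⟨u, v, hsol, rfl, rfl⟩ := h
  exact ⟨_, _, hsol.const_mul r, rfl, rfl⟩

theorem add_period {s : ℝ} (h : CauchyTransfer a c d ξ η) (hs : Function.Periodic a s) :
    CauchyTransfer a (c + s) (d + s) ξ η := by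
  obtain ⟨u, v, hsol, hc, hd⟩ := h
  have hshift := hsol.comp_sub_const s
  simp only [hs.sub_eq] at hshift
  exact ⟨_, _, hshift, by simpa using hc, by simpa using hd⟩

theorem iterate {p : ℝ} (h : CauchyTransfer a 0 p ξ (-ξ)) (hp : 0 ≤ p)
    (ha : Function.Periodic a p) (hint : ∀ x y, IntervalIntegrable a volume x y) (k : ℕ) :
    CauchyTransfer a 0 (k * p) ξ ((-1 : ℝ) ^ k • ξ) := by
  induction k with
  | zero => simpa using refl a 0 ξ
  | succ k ih =>
    have hcell := (h.add_period (ha.nat_mul k)).smul ((-1) ^ k)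
    rw [zero_add, add_comm p] at hcell
    have := ih.trans hcell (by positivity) (by linarith) (hint _ _)
    rw [pow_succ, mul_smul, neg_one_smul, Nat.cast_succ, add_one_mul]
    exact this

end CauchyTransfer

section SquareWell

/-- The `p`-periodic square well: `μ²` at distance less than `δ` from the midpoint of each period
cell `[kp, (k+1)p]`, and `ω²` elsewhere. -/
noncomputable def squareWell (p δ ω μ x : ℝ) : ℝ :=
  if |p * Int.fract (x / p) - p / 2| < δ then μ ^ 2 else ω ^ 2

variable {p δ ω μ : ℝ}

theorem squareWell_periodic (hp : p ≠ 0) (δ ω μ : ℝ) :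
    Function.Periodic (squareWell p δ ω μ) p := fun x => by
  simp only [squareWell, add_div, div_self hp, Int.fract_add_one]

theorem measurable_squareWell (p δ ω μ : ℝ) : Measurable (squareWell p δ ω μ) := by
  unfold squareWell
  exact Measurable.ite (measurableSet_lt (by fun_prop) measurable_const) measurable_const
    measurable_const

theorem intervalIntegrable_squareWell (p δ ω μ x y : ℝ) :
    IntervalIntegrable (squareWell p δ ω μ) volume x y := by
  refine (intervalIntegrable_const (c := max (μ ^ 2) (ω ^ 2))).mono_fun
    (measurable_squareWell p δ ω μ).aestronglyMeasurable (.of_forall fun t => ?_)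
  simp only [squareWell]
  split_ifs
  all_goals
    rw [norm_of_nonneg (sq_nonneg _), norm_of_nonneg (by positivity)]
    simp

theorem sq_le_squareWell (hω : 0 ≤ ω) (hωμ : ω ≤ μ) (x : ℝ) :
    ω ^ 2 ≤ squareWell p δ ω μ x := by
  unfold squareWell
  split_ifs
  · gcongr
  · rfl

theorem squareWell_sub_eq_indicator {x : ℝ} (hx : x ∈ Ioo 0 p) : squareWell p δ ω μ x - ω ^ 2 =
      (Ioo (p / 2 - δ) (p / 2 + δ)).indicator (fun _ => μ ^ 2 - ω ^ 2) x := by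
  have hp : 0 < p := hx.1.trans hx.2
  have hfract : Int.fract (x / p) = x / p :=
    Int.fract_eq_self.2 ⟨div_nonneg hx.1.le hp.le, (div_lt_one hp).2 hx.2⟩
  rw [squareWell, hfract, mul_div_cancel₀ _ hp.ne', indicator_apply]
  have : |x - p / 2| < δ ↔ x ∈ Ioo (p / 2 - δ) (p / 2 + δ) := by
    rw [← Real.ball_eq_Ioo, Metric.mem_ball, Real.dist_eq]
  simp only [this]
  split_ifs <;> ring

theorem integral_squareWell (hδ : 0 < δ) (hδp : δ ≤ p / 2) (ω μ : ℝ) (k : ℕ) :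
    ∫ x in 0..(k * p), (squareWell p δ ω μ x - ω ^ 2) = k * (2 * δ * (μ ^ 2 - ω ^ 2)) := by
  have hp : 0 < p := by linarith
  have hper : Function.Periodic (fun x => squareWell p δ ω μ x - ω ^ 2) p := fun x => by
    simp only [squareWell_periodic hp.ne' δ ω μ x]
  have hcell : ∫ x in 0..p, (squareWell p δ ω μ x - ω ^ 2) = 2 * δ * (μ ^ 2 - ω ^ 2) := by
    have hwell : Ioo (p / 2 - δ) (p / 2 + δ) ⊆ Ioo 0 p :=
      Ioo_subset_Ioo (by linarith) (by linarith)
    rw [intervalIntegral.integral_of_le hp.le, integral_Ioc_eq_integral_Ioo,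
      setIntegral_congr_fun measurableSet_Ioo fun x hx => squareWell_sub_eq_indicator hx,
      setIntegral_indicator measurableSet_Ioo, inter_eq_right.2 hwell, setIntegral_const,
      volume_real_Ioo_of_le (by linarith), smul_eq_mul]
    ring
  have := hper.intervalIntegral_add_zsmul_eq k 0 fun x y =>
    (intervalIntegrable_squareWell p δ ω μ x y).sub intervalIntegrable_const
  simpa only [zero_add, hcell, zsmul_eq_mul, Int.cast_natCast] using this

theorem cauchyTransfer_squareWell (hδ : 0 ≤ δ) (hδp : δ ≤ p / 2) (hcos : cos (μ * δ) ≠ 0)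
    (hmatch : μ * sin (ω * (p / 2 - δ)) * sin (μ * δ) = ω * cos (ω * (p / 2 - δ)) * cos (μ * δ)) :
    CauchyTransfer (squareWell p δ ω μ) 0 p (0, ω) (-(0, ω)) := by
  set q := p / 2 - δ with hq
  set B := sin (ω * q) / cos (μ * δ)
  have hB : B * cos (μ * δ) = sin (ω * q) := div_mul_cancel₀ _ hcos
  have hB' : B * (μ * sin (μ * δ)) = ω * cos (ω * q) := by
    refine mul_right_cancel₀ hcos ?_
    linear_combination μ * sin (μ * δ) * hB + hmatch
  have hindicator : ∀ x ∈ Ioo 0 p, squareWell p δ ω μ x - ω ^ 2 =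
      (Ioo q (p / 2 + δ)).indicator (fun _ => μ ^ 2 - ω ^ 2) x := fun x hx =>
    squareWell_sub_eq_indicator hx
  have hleft : CauchyTransfer (squareWell p δ ω μ) 0 q (0, ω) (sin (ω * q), ω * cos (ω * q)) := by
    refine ⟨_, _, isSolOn_sin (κ := ω) (fun x hx => ?_) 1 0, ?_, ?_⟩
    · have := hindicator x ⟨hx.1, by linarith [hx.2]⟩
      rwa [indicator_of_notMem fun h => h.1.not_gt hx.2, sub_eq_zero] at this
    · simp
    · simp
  have hmiddle : CauchyTransfer (squareWell p δ ω μ) q (p - q) (sin (ω * q), ω * cos (ω * q))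
      (sin (ω * q), -(ω * cos (ω * q))) := by
    refine ⟨_, _, isSolOn_sin (κ := μ) (fun x hx => ?_) B (π / 2 - μ * (p / 2)), ?_, ?_⟩
    · have := hindicator x ⟨by linarith [hx.1], by linarith [hx.2]⟩
      rwa [indicator_of_mem (mem_Ioo.2 ⟨hx.1, by linarith [hx.2]⟩), sub_left_inj] at this
    · rw [show μ * q + (π / 2 - μ * (p / 2)) = π / 2 - μ * δ by rw [hq]; ring,
        sin_pi_div_two_sub, cos_pi_div_two_sub, hB, hB']
    · rw [show μ * (p - q) + (π / 2 - μ * (p / 2)) = μ * δ + π / 2 by rw [hq]; ring,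
        sin_add_pi_div_two, cos_add_pi_div_two, mul_neg, mul_neg, hB, hB']
  have hright : CauchyTransfer (squareWell p δ ω μ) (p - q) p (sin (ω * q), -(ω * cos (ω * q)))
      (-(0, ω)) := by
    refine ⟨_, _, isSolOn_sin (κ := -ω) (fun x hx => ?_) 1 (ω * p), ?_, ?_⟩
    · have := hindicator x ⟨by linarith [hx.1], hx.2⟩
      rwa [indicator_of_notMem fun h => (hx.1.trans h.2).not_ge (by linarith), sub_eq_zero,
        ← neg_sq] at this
    · rw [show -ω * (p - q) + ω * p = ω * q by ring]
      simp
    · simp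
  have hint := intervalIntegrable_squareWell p δ ω μ
  exact (hleft.trans hmiddle (by linarith) (by linarith) (hint _ _)).trans hright (by linarith)
    (by linarith) (hint _ _)

theorem exists_matching_frequency (hω : 0 < ω) (hδ : 0 < δ) (hδp : δ < p / 2) (hωp : ω * p < π) :
    ∃ μ, ω < μ ∧ μ * δ < π / 2 ∧
      μ * sin (ω * (p / 2 - δ)) * sin (μ * δ) = ω * cos (ω * (p / 2 - δ)) * cos (μ * δ) := by
  set f : ℝ → ℝ := fun μ =>
    μ * sin (ω * (p / 2 - δ)) * sin (μ * δ) - ω * cos (ω * (p / 2 - δ)) * cos (μ * δ)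
  have hωδ : ω < π / 2 / δ := by
    rw [lt_div_iff₀ hδ]
    nlinarith
  have hf_left : f ω < 0 := by
    have hcos : 0 < cos (ω * (p / 2 - δ) + ω * δ) :=
      cos_pos_of_mem_Ioo ⟨by nlinarith [pi_pos], by nlinarith⟩
    rw [cos_add] at hcos
    linear_combination ω * hcos
  have hf_right : 0 < f (π / 2 / δ) := by
    have hsin : 0 < sin (ω * (p / 2 - δ)) :=
      sin_pos_of_pos_of_lt_pi (by nlinarith) (by nlinarith)
    simp only [f, div_mul_cancel₀ _ hδ.ne', sin_pi_div_two, cos_pi_div_two]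
    have := pi_pos
    simp only [mul_one, mul_zero, sub_zero]
    positivity
  obtain ⟨μ, hμ, hfμ⟩ := intermediate_value_Ioo hωδ.le (by fun_prop : Continuous f).continuousOn
    ⟨hf_left, hf_right⟩
  exact ⟨μ, hμ.1, (lt_div_iff₀ hδ).1 hμ.2, sub_eq_zero.1 hfμ⟩

theorem sq_sub_sq_lt_cot_of_matching (hω : 0 < ω) (hωμ : ω < μ) (hδ : 0 < δ) (hμδ : μ * δ < π / 2)
    {q : ℝ} (hq : 0 < sin (ω * q))
    (hmatch : μ * sin (ω * q) * sin (μ * δ) = ω * cos (ω * q) * cos (μ * δ)) :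
    2 * δ * (μ ^ 2 - ω ^ 2) < 2 * ω * cot (ω * q) := by
  have hpos : 0 < μ * δ := by nlinarith
  have htan : μ * tan (μ * δ) = ω * cot (ω * q) := by
    have hcos : cos (μ * δ) ≠ 0 :=
      (cos_pos_of_mem_Ioo ⟨by linarith [pi_pos], hμδ⟩).ne'
    rw [tan_eq_sin_div_cos, Real.cot_eq_cos_div_sin]
    field_simp
    linear_combination hmatch
  have hlt : μ * (μ * δ) < μ * tan (μ * δ) :=
    mul_lt_mul_of_pos_left (lt_tan hpos hμδ) (hω.trans hωμ)
  have hsq : 0 < δ * ω ^ 2 := by positivity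
  linear_combination 2 * hlt + 2 * htan + 2 * hsq

theorem exists_squareWell_lt {b : ℝ} (hω : 0 < ω) (hp : 0 < p) (hωp : ω * p < π)
    (hb : 2 * ω * cot (ω * (p / 2)) < b) :
    ∃ δ μ, 0 < δ ∧ δ ≤ p / 2 ∧ ω < μ ∧ 2 * δ * (μ ^ 2 - ω ^ 2) < b ∧
      CauchyTransfer (squareWell p δ ω μ) 0 p (0, ω) (-(0, ω)) := by
  have hsin : sin (ω * (p / 2)) ≠ 0 := (sin_pos_of_pos_of_lt_pi (by positivity)
    (by linarith [pi_pos])).ne'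
  have hcot : ContinuousAt (fun δ => 2 * ω * cot (ω * (p / 2 - δ))) 0 := by
    simp only [Real.cot_eq_cos_div_sin]
    exact (ContinuousAt.div (by fun_prop) (by fun_prop) (by simpa using hsin)).const_mul _
  have hnear : ∀ᶠ δ in 𝓝 0, 2 * ω * cot (ω * (p / 2 - δ)) < b :=
    hcot.eventually_lt_const (by simpa using hb)
  obtain ⟨δ, hδb, hδ, hδp⟩ :=
    ((hnear.filter_mono nhdsWithin_le_nhds).and (Ioo_mem_nhdsGT (half_pos hp))).exists
  obtain ⟨μ, hωμ, hμδ, hmatch⟩ := exists_matching_frequency hω hδ hδp hωp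
  have hμδ' : 0 < cos (μ * δ) := cos_pos_of_mem_Ioo ⟨by nlinarith [pi_pos], hμδ⟩
  have hq : 0 < sin (ω * (p / 2 - δ)) :=
    sin_pos_of_pos_of_lt_pi (by nlinarith) (by nlinarith)
  exact ⟨δ, μ, hδ, hδp.le, hωμ, (sq_sub_sq_lt_cot_of_matching hω hωμ hδ hμδ hq hmatch).trans hδb,
    cauchyTransfer_squareWell hδ.le hδp.le hμδ'.ne' hmatch⟩

theorem prec_squareWell {T : ℝ} (hω : 0 ≤ ω) (hωμ : ω < μ) (hδ : 0 < δ) (hδp : δ ≤ p / 2)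
    (hpT : p ≤ T) : Prec T (fun _ => ω ^ 2) (squareWell p δ ω μ) := by
  refine ⟨.of_forall fun x => sq_le_squareWell hω hωμ.le x, ?_⟩
  have hsub : Ioo (p / 2 - δ) (p / 2 + δ) ⊆ {x ∈ Icc 0 T | ω ^ 2 < squareWell p δ ω μ x} := by
    intro x hx
    have hx' : x ∈ Ioo 0 p := ⟨by linarith [hx.1], by linarith [hx.2]⟩
    have heq := squareWell_sub_eq_indicator (δ := δ) (ω := ω) (μ := μ) hx'
    rw [indicator_of_mem hx, sub_left_inj] at heq
    refine ⟨⟨hx'.1.le, hx'.2.le.trans hpT⟩, ?_⟩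
    rw [heq]
    gcongr
  exact ((Measure.measure_Ioo_pos volume).2 (by linarith)).trans_le (measure_mono hsub)

theorem squareWell_mem_LambdaN {T : ℝ} {n k : ℕ} (hω : 0 < ω) (hωμ : ω < μ) (hδ : 0 < δ)
    (hδp : δ ≤ p / 2) (hk : Even k) (hk0 : k ≠ 0) (hT : k * p = T) (hlam : lam T n = ω ^ 2)
    (hcell : CauchyTransfer (squareWell p δ ω μ) 0 p (0, ω) (-(0, ω))) :
    squareWell p δ ω μ ∈ LambdaN T n := by
  have hp : 0 < p := by linarith
  have hpT : p ≤ T :=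
    hT ▸ le_mul_of_one_le_left hp.le (by exact_mod_cast Nat.one_le_iff_ne_zero.2 hk0)
  have hT0 : 0 < T := hp.trans_le hpT
  have hper := squareWell_periodic hp.ne' δ ω μ
  have hint := intervalIntegrable_squareWell p δ ω μ
  obtain ⟨u, v, hsol, h0, hend⟩ := hcell.iterate hp.le hper hint k
  rw [hT] at hsol hend
  rw [hk.neg_one_pow, one_smul] at hend
  have hv : v 0 ≠ 0 := (congrArg Prod.snd h0).trans_ne hω.ne'
  exact ⟨⟨measurable_squareWell p δ ω μ, hT ▸ hper.nat_mul k,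
      (intervalIntegrable_iff_integrableOn_Icc_of_le hT0.le).1 (hint 0 T)⟩,
    hlam ▸ prec_squareWell hω.le hωμ hδ hδp hpT,
    u, v, ⟨hsol, Prod.ext_iff.1 (h0.trans hend.symm)⟩, hsol.exists_ne_zero hT0 hv⟩

theorem exists_mem_LambdaN_integral_lt {T : ℝ} {n : ℕ} (hT : 0 < T) (hn : 1 ≤ n) {b : ℝ}
    (hb : beta1 T n < b) : ∃ a ∈ LambdaN T n, ∫ x in 0..T, |a x - lam T n| < b := by
  have : (0 : ℝ) < n := by exact_mod_cast hn
  set k := 2 * (n + 1) with hk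
  set p := T / k
  set ω := 2 * π * n / T
  have hω : 0 < ω := by positivity
  have hkp : k * p = T := mul_div_cancel₀ _ (by positivity)
  have hωp : ω * (p / 2) = π * n / (2 * (n + 1)) := by
    simp only [ω, p, hk]
    push_cast
    field_simp
  have hωp_lt : ω * p < π := by
    have : π * n / (2 * (n + 1)) < π / 2 := by
      rw [div_lt_div_iff₀ (by positivity) two_pos]
      linarith [pi_pos]
    linarith
  have hbudget : 2 * ω * cot (ω * (p / 2)) < b / k := by
    rw [hωp, lt_div_iff₀ (by positivity)]
    calc 2 * ω * cot (π * n / (2 * (n + 1))) * k = beta1 T n := by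
          rw [beta1_eq]
          push_cast [hk]
          ring
      _ < b := hb
  obtain ⟨δ, μ, hδ, hδp, hωμ, hcost, hcell⟩ :=
    exists_squareWell_lt hω (by positivity) hωp_lt hbudget
  have hmem := squareWell_mem_LambdaN hω hωμ hδ hδp (even_two_mul _) (by omega) hkp
    (lam_eq_sq T n) hcell
  refine ⟨_, hmem, ?_⟩
  calc ∫ x in 0..T, |squareWell p δ ω μ x - lam T n|
      = ∫ x in 0..(k * p), (squareWell p δ ω μ x - ω ^ 2) := by
        rw [hmem.2.1.integral_abs_sub hT.le, lam_eq_sq, hkp]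
    _ = k * (2 * δ * (μ ^ 2 - ω ^ 2)) := integral_squareWell hδ hδp ω μ k
    _ < b := (lt_div_iff₀' (by positivity)).1 hcost

end SquareWell

theorem stmt5 (T : ℝ) (hT : 0 < T) (n : ℕ) (hn : 1 ≤ n) :
    (∀ ε > (0:ℝ), ∃ a ∈ LambdaN T n,
        (∫ x in (0:ℝ)..T, |a x - lam T n|) < beta1 T n + ε) ∧
    sInf ((fun a : ℝ → ℝ => ∫ x in (0:ℝ)..T, |a x - lam T n|) '' LambdaN T n) = beta1 T n := by
  have hsharp := fun b hb => exists_mem_LambdaN_integral_lt hT hn (b := b) hb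
  refine ⟨fun ε hε => hsharp _ (lt_add_of_pos_right _ hε), ?_⟩
  refine csInf_eq_of_forall_ge_of_forall_gt_exists_lt ?_ ?_ fun b hb => ?_
  · obtain ⟨a, ha, -⟩ := hsharp _ (lt_add_one _)
    exact ⟨_, mem_image_of_mem _ ha⟩
  · rintro _ ⟨a, ha, rfl⟩
    exact beta1_le_integral hT hn ha
  · obtain ⟨a, ha, hlt⟩ := hsharp b hb
    exact ⟨_, mem_image_of_mem _ ha, hlt⟩
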